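/- There is an absolute constant c₀ such that for every r with 1 ≤ r < 2, every n ∈ ℕ, and every bounded linear operator T : X → Y between real Banach spaces of rank at most n each of which is absolutely (r,1)-summing, one has π_1(T) ≤ c₀ · (1/r − 1/2)^{−1/2} · n^{1/2} · π_{r,1}(T). -/

import Mathlib

open scoped ENNReal NNReal BigOperators

noncomputable section

/-- The `ℓ_p`-sum `(∑ i, f i ^ p) ^ (1/p)` of a finite family in `ℝ≥0∞`,
with the usual sup-modification for `p = ∞`. -/
def eSum (p : ℝ≥0∞) {ι : Type*} [Fintype ι] (f : ι → ℝ≥0∞) : ℝ≥0∞ :=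
  if p = ∞ then ⨆ i, f i else (∑ i, f i ^ p.toReal) ^ (1 / p.toReal)

/-- The weak `ℓ_q`-norm of a finite family of vectors:
`sup { (∑ k |⟨x_k, x*⟩|^q)^(1/q) : x* in the unit ball of the dual }`. -/
def weakLq (q : ℝ≥0∞) {X : Type*} [NormedAddCommGroup X] [NormedSpace ℝ X]
    {n : ℕ} (x : Fin n → X) : ℝ≥0∞ :=
  ⨆ f : {f : X →L[ℝ] ℝ // ‖f‖ ≤ 1}, eSum q fun k => ENNReal.ofReal |f.1 (x k)|

/-- The `(p,q)`-summing norm of `T` with respect to `n` vectors. -/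
def piN (p q : ℝ≥0∞) {X Y : Type*} [NormedAddCommGroup X] [NormedSpace ℝ X]
    [NormedAddCommGroup Y] [NormedSpace ℝ Y] (n : ℕ) (T : X →L[ℝ] Y) : ℝ≥0∞ :=
  ⨆ x : {x : Fin n → X // weakLq q x ≤ 1}, eSum p fun k => ENNReal.ofReal ‖T (x.1 k)‖

/-- The `(p,q)`-summing norm of `T`. -/
def piPQ (p q : ℝ≥0∞) {X Y : Type*} [NormedAddCommGroup X] [NormedSpace ℝ X]
    [NormedAddCommGroup Y] [NormedSpace ℝ Y] (T : X →L[ℝ] Y) : ℝ≥0∞ :=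
  ⨆ n : ℕ, piN p q n T

/-- `T` has rank at most `n`: its range is a finite-dimensional subspace of
dimension at most `n`. -/
def RankLE {X Y : Type*} [NormedAddCommGroup X] [NormedSpace ℝ X]
    [NormedAddCommGroup Y] [NormedSpace ℝ Y] (T : X →L[ℝ] Y) (n : ℕ) : Prop :=
  FiniteDimensional ℝ (LinearMap.range (T : X →ₗ[ℝ] Y)) ∧
    Module.finrank ℝ (LinearMap.range (T : X →ₗ[ℝ] Y)) ≤ n

/-- The average of `‖∑ k, ε k • x k‖²` over all `2^n` sign choices `ε ∈ {-1,1}^n`. -/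
def radAvg {X : Type*} [NormedAddCommGroup X] [NormedSpace ℝ X] {n : ℕ}
    (x : Fin n → X) : ℝ :=
  (∑ ε : Fin n → Bool, ‖∑ k, (if ε k then (1 : ℝ) else -1) • x k‖ ^ 2) / 2 ^ n

/-- The Rademacher cotype `q` constant of `T` with respect to `n` vectors. -/
def cotypeN (q : ℝ) {X Y : Type*} [NormedAddCommGroup X] [NormedSpace ℝ X]
    [NormedAddCommGroup Y] [NormedSpace ℝ Y] (n : ℕ) (T : X →L[ℝ] Y) : ℝ≥0∞ :=
  ⨆ x : {x : Fin n → X // Real.sqrt (radAvg x) ≤ 1},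
    (∑ k, ENNReal.ofReal ‖T (x.1 k)‖ ^ q) ^ (1 / q)

/-- The Rademacher cotype `q` constant of `T`. -/
def cotype (q : ℝ) {X Y : Type*} [NormedAddCommGroup X] [NormedSpace ℝ X]
    [NormedAddCommGroup Y] [NormedSpace ℝ Y] (T : X →L[ℝ] Y) : ℝ≥0∞ :=
  ⨆ n : ℕ, cotypeN q n T

/-! Given `x₁, …, x_m` in `X` with weak `ℓ₁`-norm at most one, compose `T` with the operator
`ℓ_∞^m → X`, `e_i ↦ x_i`, to get `S : ℓ_∞^m → Y` with `π_{r,1}(S) ≤ π_{r,1}(T)`. By Pisier's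
theorem `S` factors through a Lorentz space `L_{r,1}(w)`, `w` a probability measure on `m` points:
`w` is read off a supporting functional at a family that almost attains `π_{r,1}(S)`. The inclusion
`L_2(w) ⊂ L_{r,1}(w)` has norm of order `(1/r - 1/2)^{-1/2}`, by cutting a function into dyadic
levels. So `S` factors through the Hilbert space `L_2(w)`, where its Hilbert–Schmidt sum is at
most `n^{1/2}` times its norm, and Cauchy–Schwarz bounds `∑ ‖T x_i‖ = ∑ ‖S e_i‖`. -/

section Summing

variable {ι Y : Type*} [SeminormedAddCommGroup Y] [NormedSpace ℝ Y]

theorem mul_rpow_sub_one_mul_le {q u v : ℝ} (hq : 1 ≤ q) (hu : 0 ≤ u) (hv : 0 ≤ v) :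
    q * (u ^ (q - 1) * v) ≤ (q - 1) * u ^ q + v ^ q := by
  have hq₀ : 0 < q := by linarith
  have young := Real.geom_mean_le_arith_mean2_weighted (w₁ := (q - 1) / q) (w₂ := 1 / q)
    (p₁ := u ^ q) (p₂ := v ^ q) (div_nonneg (by linarith) hq₀.le) (by positivity)
    (by positivity) (by positivity) (by field_simp; ring)
  rw [← Real.rpow_mul hu, ← Real.rpow_mul hv, mul_div_cancel₀ _ hq₀.ne',
    mul_one_div_cancel hq₀.ne', Real.rpow_one] at young
  calc q * (u ^ (q - 1) * v) ≤ q * ((q - 1) / q * u ^ q + 1 / q * v ^ q) := by gcongr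
    _ = (q - 1) * u ^ q + v ^ q := by field_simp

/-- The functional `r • l` is a subgradient at `e` of the convex function `a ↦ ∑ k, ‖V k a‖ ^ r`. -/
theorem exists_subgradient_sum_norm_rpow {κ E : Type*} [Fintype κ] [AddCommGroup E] [Module ℝ E]
    {r : ℝ} (hr : 1 ≤ r) (V : κ → E →ₗ[ℝ] Y) (e : E) :
    ∃ l : E →ₗ[ℝ] ℝ, l e = ∑ k, ‖V k e‖ ^ r ∧
      ∀ a, r * l a ≤ (r - 1) * ∑ k, ‖V k e‖ ^ r + ∑ k, ‖V k a‖ ^ r := by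
  choose φ hφ_norm hφ_apply using fun k => exists_dual_vector'' ℝ (V k e)
  let l : E →ₗ[ℝ] ℝ := ∑ k, ‖V k e‖ ^ (r - 1) • (φ k : Y →ₗ[ℝ] ℝ) ∘ₗ V k
  have hl : ∀ a, l a = ∑ k, ‖V k e‖ ^ (r - 1) * φ k (V k a) := fun a => by simp [l]
  refine ⟨l, ?_, fun a => ?_⟩
  · rw [hl]
    refine Finset.sum_congr rfl fun k _ => ?_
    rw [hφ_apply, RCLike.ofReal_real_eq_id, id_eq,
      ← Real.rpow_add_one' (norm_nonneg _) (by linarith), sub_add_cancel]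
  · rw [hl, Finset.mul_sum, Finset.mul_sum, ← Finset.sum_add_distrib]
    refine Finset.sum_le_sum fun k _ => ?_
    have hφ_le : φ k (V k a) ≤ ‖V k a‖ :=
      (le_abs_self _).trans ((φ k).le_of_opNorm_le (hφ_norm k) _ |>.trans_eq (one_mul _))
    calc r * (‖V k e‖ ^ (r - 1) * φ k (V k a))
        ≤ r * (‖V k e‖ ^ (r - 1) * ‖V k a‖) := by gcongr
      _ ≤ (r - 1) * ‖V k e‖ ^ r + ‖V k a‖ ^ r :=
        mul_rpow_sub_one_mul_le hr (norm_nonneg _) (norm_nonneg _)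

/-- `π_{r,1}(S) ^ r ≤ A` for an operator `S` defined on the functions on `ι` with the supremum
norm. There the weak `ℓ₁`-norm of a family `x` is `sup_i ∑ k, |x k i|`. -/
def HasSummingBound (S : (ι → ℝ) →ₗ[ℝ] Y) (r A : ℝ) : Prop :=
  ∀ (N : ℕ) (x : Fin N → ι → ℝ), (∀ i, ∑ k, |x k i| ≤ 1) → ∑ k, ‖S (x k)‖ ^ r ≤ A

/-- `S` maps every function bounded by `1` and supported in `F` to a vector of norm at most
`C * w(F) ^ p`. Up to constants, this is boundedness of `S` on the Lorentz space `L_{1/p,1}(w)`. -/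
def HasRestrictedType (S : (ι → ℝ) →ₗ[ℝ] Y) (w : ι → ℝ) (p C : ℝ) : Prop :=
  ∀ (F : Finset ι) (x : ι → ℝ), (∀ i ∉ F, x i = 0) → (∀ i, |x i| ≤ 1) →
    ‖S x‖ ≤ C * (∑ i ∈ F, w i) ^ p

namespace HasSummingBound

variable {S : (ι → ℝ) →ₗ[ℝ] Y} {r A B : ℝ}

theorem nonneg (hS : HasSummingBound S r A) : 0 ≤ A := by
  simpa using hS 0 Fin.elim0 (by simp)

theorem exists_almost_extremal (hS : HasSummingBound S r A) {η : ℝ} (hη : 0 < η) :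
    ∃ A' ≤ A, HasSummingBound S r A' ∧ ∃ (N : ℕ) (x : Fin N → ι → ℝ),
      (∀ i, ∑ k, |x k i| ≤ 1) ∧ A' - η < ∑ k, ‖S (x k)‖ ^ r := by
  let sums : Set ℝ := {b | ∃ (N : ℕ) (x : Fin N → ι → ℝ), (∀ i, ∑ k, |x k i| ≤ 1) ∧
    ∑ k, ‖S (x k)‖ ^ r = b}
  have hA : A ∈ upperBounds sums := by
    rintro _ ⟨N, x, hx, rfl⟩
    exact hS N x hx
  have hne : sums.Nonempty := ⟨_, 0, Fin.elim0, by simp, rfl⟩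
  obtain ⟨_, ⟨N, x, hx, rfl⟩, hlt⟩ := exists_lt_of_lt_csSup hne (sub_lt_self (sSup sums) hη)
  exact ⟨sSup sums, csSup_le hne hA, fun N x hx => le_csSup ⟨A, hA⟩ ⟨N, x, hx, rfl⟩, N, x, hx, hlt⟩

theorem sum_norm_rpow_mul_le (hS : HasSummingBound S r A) {N : ℕ} {x : Fin N → ι → ℝ}
    (hx : ∀ i, ∑ k, |x k i| ≤ 1) {y a : ι → ℝ} (hya : ∀ i, |y i| + |a i| ≤ 1) :
    ‖S y‖ ^ r + ∑ k, ‖S (a * x k)‖ ^ r ≤ A := by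
  have hcons := hS (N + 1) (Fin.cons y fun k => a * x k) fun i => by
    simp only [Fin.sum_univ_succ, Fin.cons_zero, Fin.cons_succ, Pi.mul_apply, abs_mul,
      ← Finset.mul_sum]
    linarith [hya i, mul_le_of_le_one_right (abs_nonneg (a i)) (hx i)]
  simpa only [Fin.sum_univ_succ, Fin.cons_zero, Fin.cons_succ] using hcons

theorem exists_dominating_weight [Fintype ι] (hr : 1 ≤ r) (hS : HasSummingBound S r A) {N : ℕ}
    {x : Fin N → ι → ℝ} (hx : ∀ i, ∑ k, |x k i| ≤ 1) :
    ∃ v : ι → ℝ, (∀ i, 0 ≤ v i) ∧ ∑ i, v i ≤ A ∧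
      ∀ (F : Finset ι) (y : ι → ℝ), (∀ i ∉ F, y i = 0) → (∀ i, |y i| ≤ 1) →
        ‖S y‖ ^ r ≤ A - ∑ k, ‖S (x k)‖ ^ r + r * ∑ i ∈ F, v i := by
  classical
  obtain ⟨l, hl_one, hl⟩ :=
    exists_subgradient_sum_norm_rpow hr (fun k => S ∘ₗ LinearMap.mulRight ℝ (x k)) 1
  simp only [LinearMap.comp_apply, LinearMap.mulRight_apply, one_mul] at hl_one hl
  let c : ι → ℝ := fun i => l fun j => if i = j then 1 else 0
  have hlc : ∀ a, l a = ∑ i, a i * c i := l.pi_apply_eq_sum_univ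
  have extend : ∀ y a : ι → ℝ, (∀ i, |y i| + |a i| ≤ 1) →
      ‖S y‖ ^ r + r * l a ≤ (r - 1) * ∑ k, ‖S (x k)‖ ^ r + A := fun y a hya => by
    linarith [hl a, hS.sum_norm_rpow_mul_le hx hya]
  refine ⟨fun i => |c i|, fun i => abs_nonneg _, ?_, fun F y hyF hy => ?_⟩
  · have hsign := extend 0 (fun i => SignType.sign (c i)) fun i => by
      rcases lt_trichotomy (c i) 0 with h | h | h <;> simp [h]
    simp only [hlc, sign_mul_self] at hsign
    have hle : r * ∑ i, |c i| ≤ r * A := by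
      have hsum := mul_le_mul_of_nonneg_left (hS N x hx) (sub_nonneg.2 hr)
      linarith [Real.rpow_nonneg (norm_nonneg (S 0)) r]
    exact le_of_mul_le_mul_left hle (by linarith)
  · let ind : ι → ℝ := fun i => if i ∈ F then 1 else 0
    have hind := extend y (1 - ind) fun i => by
      by_cases hi : i ∈ F
      · simpa [ind, hi] using hy i
      · simp [ind, hi, hyF i hi]
    have hl_ind : l ind ≤ ∑ i ∈ F, |c i| := by
      simp only [hlc, ind, ite_mul, one_mul, zero_mul, Finset.sum_ite_mem, Finset.univ_inter]
      exact Finset.sum_le_sum fun i _ => le_abs_self _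
    rw [map_sub, hl_one] at hind
    have hmul : r * l ind ≤ r * ∑ i ∈ F, |c i| := by gcongr
    linarith

/-- Pisier's factorization theorem through the Lorentz space `L_{r,1}(w)`. -/
theorem exists_hasRestrictedType [Fintype ι] (hr : 1 ≤ r) (hS : HasSummingBound S r A)
    (hAB : A < B) :
    ∃ w : ι → ℝ, (∀ i, 0 < w i) ∧ ∑ i, w i ≤ 1 ∧
      HasRestrictedType S w (1 / r) ((r * B) ^ (1 / r)) := by
  have hr₀ : 0 < r := by linarith
  have hB : 0 < B := hS.nonneg.trans_lt hAB
  -- The gap `B - A` is spread evenly over the points: this makes `w` positive and absorbs the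
  -- amount by which the family misses the supremum.
  let η : ℝ := (B - A) / (Fintype.card ι + 1)
  have hη : 0 < η := div_pos (sub_pos.2 hAB) (by positivity)
  have hη_card : Fintype.card ι * η ≤ B - A := by
    have : (Fintype.card ι + 1) * η = B - A := mul_div_cancel₀ _ (by positivity)
    linarith
  obtain ⟨A', hA', hS', N, x, hx, hlt⟩ := hS.exists_almost_extremal hη
  obtain ⟨v, hv, hv_sum, hdom⟩ := hS'.exists_dominating_weight hr hx
  refine ⟨fun i => (v i + η) / B, fun i => div_pos (by linarith [hv i]) hB, ?_,
    fun F y hyF hy => ?_⟩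
  · rw [← Finset.sum_div, div_le_one hB, Finset.sum_add_distrib, Finset.sum_const,
      Finset.card_univ, nsmul_eq_mul]
    linarith
  rcases F.eq_empty_or_nonempty with rfl | hF
  · have hy₀ : y = 0 := funext fun i => hyF i (Finset.notMem_empty i)
    simp [hy₀, Real.zero_rpow (inv_ne_zero hr₀.ne')]
  have hw_nonneg : 0 ≤ ∑ i ∈ F, (v i + η) / B :=
    Finset.sum_nonneg fun i _ => div_nonneg (by linarith [hv i]) hB.le
  have hpow : ‖S y‖ ^ r ≤ r * B * ∑ i ∈ F, (v i + η) / B := by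
    have hcard : η ≤ F.card * η :=
      le_mul_of_one_le_left hη.le (by exact_mod_cast hF.card_pos)
    rw [← Finset.sum_div, mul_assoc, mul_div_cancel₀ _ hB.ne', Finset.sum_add_distrib,
      Finset.sum_const, nsmul_eq_mul, mul_add]
    nlinarith [hdom F y hyF hy]
  rw [← Real.mul_rpow (by positivity) hw_nonneg, one_div]
  exact (Real.le_rpow_inv_iff_of_pos (norm_nonneg _) (by positivity) hr₀).2 hpow

end HasSummingBound

end Summing

section Dyadic

theorem sum_range_pow_rpow_le {q s : ℝ} (hq : 0 ≤ q) (hq' : q < 1) (hs : 0 < s) (hs' : s ≤ 1)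
    (J : ℕ) : ∑ j ∈ Finset.range J, (q ^ j) ^ s ≤ 1 / (s * (1 - q)) := by
  have bernoulli : q ^ s ≤ 1 - s * (1 - q) := by
    have := rpow_one_add_le_one_add_mul_self (s := q - 1) (by linarith) hs.le hs'
    rw [add_sub_cancel] at this
    linarith
  have hsq : 0 < s * (1 - q) := mul_pos hs (sub_pos.2 hq')
  have hgeom : (∑ j ∈ Finset.range J, (q ^ s) ^ j) * (1 - q ^ s) ≤ 1 := by
    rw [geom_sum_mul_neg]
    exact sub_le_self _ (by positivity)
  have hswap : ∀ j : ℕ, (q ^ j) ^ s = (q ^ s) ^ j := fun j => (Real.rpow_pow_comm hq s j).symm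
  simp only [hswap]
  rw [le_div_iff₀ hsq]
  refine le_trans ?_ hgeom
  gcongr
  linarith

/-- The inclusion `L_2 ⊂ L_{1/p,1}`, with `μ j` in the role of the measure of the level set
`{2 ^ j < |f| ≤ 2 ^ (j + 1)}`. -/
theorem sum_two_pow_mul_rpow_le {p : ℝ} (hp : 1 / 2 < p) (hp' : p ≤ 1) {J : ℕ} {μ : ℕ → ℝ}
    (hμ : ∀ j, 0 ≤ μ j) (h : ∑ j ∈ Finset.range J, 4 ^ j * μ j ≤ 1) :
    ∑ j ∈ Finset.range J, 2 ^ j * μ j ^ p ≤ (p - 1 / 2) ^ (-(1 / 2) : ℝ) := by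
  have hμ_le : ∀ j ∈ Finset.range J, μ j ≤ (1 / 4 : ℝ) ^ j := fun j hj => by
    rw [one_div_pow, le_div_iff₀' (by positivity)]
    exact (Finset.single_le_sum (f := fun j => 4 ^ j * μ j)
      (fun i _ => mul_nonneg (by positivity) (hμ i)) hj).trans h
  have htail : ∑ j ∈ Finset.range J, μ j ^ (2 * p - 1) ≤ (p - 1 / 2)⁻¹ :=
    calc ∑ j ∈ Finset.range J, μ j ^ (2 * p - 1)
        ≤ ∑ j ∈ Finset.range J, ((1 / 4 : ℝ) ^ j) ^ (2 * p - 1) :=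
          Finset.sum_le_sum fun j hj => Real.rpow_le_rpow (hμ j) (hμ_le j hj) (by linarith)
      _ ≤ 1 / ((2 * p - 1) * (1 - 1 / 4)) :=
          sum_range_pow_rpow_le (by norm_num) (by norm_num) (by linarith) (by linarith) J
      _ ≤ (p - 1 / 2)⁻¹ := by
          rw [← one_div]
          exact one_div_le_one_div_of_le (by linarith) (by linarith)
  have hsplit : ∀ j, 2 ^ j * μ j ^ p = √(4 ^ j * μ j) * √(μ j ^ (2 * p - 1)) := fun j => by
    rw [Real.sqrt_mul (by positivity), show (4 : ℝ) = 2 ^ 2 by norm_num, pow_right_comm,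
      Real.sqrt_sq (by positivity), Real.sqrt_eq_rpow, Real.sqrt_eq_rpow, ← Real.rpow_mul (hμ j),
      mul_assoc, ← Real.rpow_add_of_nonneg (hμ j) (by norm_num) (by linarith)]
    ring_nf
  calc ∑ j ∈ Finset.range J, 2 ^ j * μ j ^ p
      = ∑ j ∈ Finset.range J, √(4 ^ j * μ j) * √(μ j ^ (2 * p - 1)) := by simp only [hsplit]
    _ ≤ √(∑ j ∈ Finset.range J, 4 ^ j * μ j) * √(∑ j ∈ Finset.range J, μ j ^ (2 * p - 1)) :=
        Real.sum_sqrt_mul_sqrt_le _ (fun j => mul_nonneg (by positivity) (hμ j))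
          fun j => Real.rpow_nonneg (hμ j) _
    _ ≤ √1 * √(p - 1 / 2)⁻¹ := by gcongr
    _ = (p - 1 / 2) ^ (-(1 / 2) : ℝ) := by
        rw [Real.sqrt_one, one_mul, Real.sqrt_eq_rpow, Real.inv_rpow (by linarith),
          Real.rpow_neg (by linarith)]

/-- The least `j` with `|t| ≤ 2 ^ j`; all `t` with `|t| ≤ 1` share the level `0`. -/
def dyadicLevel (t : ℝ) : ℕ := Nat.clog 2 ⌈|t|⌉₊

theorem dyadicLevel_le_iff {t : ℝ} {j : ℕ} : dyadicLevel t ≤ j ↔ |t| ≤ 2 ^ j := by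
  rw [dyadicLevel, Nat.clog_le_iff_le_pow one_lt_two, Nat.ceil_le]
  norm_cast

variable {ι Y : Type*} [SeminormedAddCommGroup Y] [NormedSpace ℝ Y]
  {S : (ι → ℝ) →ₗ[ℝ] Y} {w : ι → ℝ} {p C : ℝ}

theorem HasRestrictedType.norm_le_of_abs_le (hS : HasRestrictedType S w p C) {F : Finset ι}
    {x : ι → ℝ} {t : ℝ} (ht : 0 < t) (hxF : ∀ i ∉ F, x i = 0) (hx : ∀ i, |x i| ≤ t) :
    ‖S x‖ ≤ t * (C * (∑ i ∈ F, w i) ^ p) := by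
  have hscaled := hS F (t⁻¹ • x) (fun i hi => by simp [hxF i hi]) fun i => by
    rw [Pi.smul_apply, smul_eq_mul, abs_mul, abs_of_pos (inv_pos.2 ht)]
    exact inv_mul_le_one_of_le₀ (hx i) ht.le
  rwa [map_smul, norm_smul, Real.norm_of_nonneg (inv_pos.2 ht).le, inv_mul_le_iff₀ ht] at hscaled

variable [Fintype ι]

theorem sum_four_pow_mul_weight_dyadicLevel_le (hw : ∀ i, 0 ≤ w i) (x : ι → ℝ) (J : ℕ) :
    ∑ j ∈ Finset.range J, 4 ^ j * ∑ i with dyadicLevel (x i) = j + 1, w i ≤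
      ∑ i, w i * x i ^ 2 := by
  have hterm : ∀ j i, dyadicLevel (x i) = j + 1 → 4 ^ j * w i ≤ w i * x i ^ 2 := by
    intro j i hi
    have hlt : 2 ^ j < |x i| := not_le.1 fun hle => by
      have := dyadicLevel_le_iff.2 hle
      omega
    have hsq : (4 : ℝ) ^ j ≤ x i ^ 2 := by
      rw [← sq_abs, show (4 : ℝ) = 2 ^ 2 by norm_num, pow_right_comm]
      gcongr
    rw [mul_comm]
    exact mul_le_mul_of_nonneg_left hsq (hw i)
  have hfiber : ∀ j, 0 ≤ ∑ i with dyadicLevel (x i) = j, w i * x i ^ 2 := fun j =>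
    Finset.sum_nonneg fun i _ => mul_nonneg (hw i) (sq_nonneg _)
  calc ∑ j ∈ Finset.range J, 4 ^ j * ∑ i with dyadicLevel (x i) = j + 1, w i
      ≤ ∑ j ∈ Finset.range J, ∑ i with dyadicLevel (x i) = j + 1, w i * x i ^ 2 := by
        simp only [Finset.mul_sum]
        exact Finset.sum_le_sum fun j _ => Finset.sum_le_sum fun i hi =>
          hterm j i (Finset.mem_filter.1 hi).2
    _ ≤ ∑ j ∈ Finset.range (J + 1), ∑ i with dyadicLevel (x i) = j, w i * x i ^ 2 := by
        rw [Finset.sum_range_succ']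
        exact le_add_of_nonneg_right (hfiber 0)
    _ ≤ ∑ i, w i * x i ^ 2 :=
        Finset.sum_fiberwise_le_sum_of_sum_fiber_nonneg fun _ _ => hfiber _

namespace HasRestrictedType

theorem norm_le_sum_dyadicLevel (hS : HasRestrictedType S w p C) {x : ι → ℝ} {J : ℕ}
    (hJ : ∀ i, dyadicLevel (x i) < J) :
    ‖S x‖ ≤ ∑ j ∈ Finset.range J, 2 ^ j * (C * (∑ i with dyadicLevel (x i) = j, w i) ^ p) := by
  let piece : ℕ → ι → ℝ := fun j i => if dyadicLevel (x i) = j then x i else 0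
  have hx : x = ∑ j ∈ Finset.range J, piece j := by
    ext i
    simp [piece, Finset.sum_apply, hJ i]
  have hpiece : ∀ j i, |piece j i| ≤ 2 ^ j := fun j i => by
    by_cases hi : dyadicLevel (x i) = j
    · simpa [piece, hi] using dyadicLevel_le_iff.1 hi.le
    · simp [piece, hi]
  calc ‖S x‖ = ‖∑ j ∈ Finset.range J, S (piece j)‖ := by rw [← map_sum, ← hx]
    _ ≤ ∑ j ∈ Finset.range J, ‖S (piece j)‖ := norm_sum_le _ _
    _ ≤ _ := Finset.sum_le_sum fun j _ => hS.norm_le_of_abs_le (by positivity)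
        (fun i hi => if_neg fun h => hi (by simpa using h)) (hpiece j)

theorem norm_le_of_sum_mul_sq_le_one (hS : HasRestrictedType S w p C) (hC : 0 ≤ C)
    (hw : ∀ i, 0 ≤ w i) (hw_sum : ∑ i, w i ≤ 1) (hp : 1 / 2 < p) (hp' : p ≤ 1) {x : ι → ℝ}
    (hx : ∑ i, w i * x i ^ 2 ≤ 1) :
    ‖S x‖ ≤ 3 * C * (p - 1 / 2) ^ (-(1 / 2) : ℝ) := by
  let μ : ℕ → ℝ := fun j => ∑ i with dyadicLevel (x i) = j, w i
  have hμ : ∀ j, 0 ≤ μ j := fun j => Finset.sum_nonneg fun i _ => hw i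
  obtain ⟨J, hJ⟩ : ∃ J, ∀ i, dyadicLevel (x i) < J + 1 :=
    ⟨Finset.univ.sup fun i => dyadicLevel (x i), fun i =>
      Nat.lt_succ_of_le (Finset.le_sup (f := fun i => dyadicLevel (x i)) (Finset.mem_univ i))⟩
  have hlow : μ 0 ^ p ≤ (p - 1 / 2) ^ (-(1 / 2) : ℝ) := by
    have hμ₀ : μ 0 ≤ 1 :=
      (Finset.sum_le_univ_sum_of_nonneg hw).trans hw_sum
    exact (Real.rpow_le_one (hμ 0) hμ₀ (by linarith)).trans
      (Real.one_le_rpow_of_pos_of_le_one_of_nonpos (by linarith) (by linarith) (by norm_num))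
  have hhigh : ∑ j ∈ Finset.range J, 2 ^ j * μ (j + 1) ^ p ≤ (p - 1 / 2) ^ (-(1 / 2) : ℝ) :=
    sum_two_pow_mul_rpow_le hp hp' (fun j => hμ (j + 1))
      ((sum_four_pow_mul_weight_dyadicLevel_le hw x J).trans hx)
  calc ‖S x‖ ≤ ∑ j ∈ Finset.range (J + 1), 2 ^ j * (C * μ j ^ p) := hS.norm_le_sum_dyadicLevel hJ
    _ = C * (2 * ∑ j ∈ Finset.range J, 2 ^ j * μ (j + 1) ^ p + μ 0 ^ p) := by
        rw [Finset.sum_range_succ', mul_add, Finset.mul_sum, Finset.mul_sum, pow_zero, one_mul]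
        congr 1
        exact Finset.sum_congr rfl fun j _ => by ring
    _ ≤ C * (2 * (p - 1 / 2) ^ (-(1 / 2) : ℝ) + (p - 1 / 2) ^ (-(1 / 2) : ℝ)) := by gcongr
    _ = 3 * C * (p - 1 / 2) ^ (-(1 / 2) : ℝ) := by ring

end HasRestrictedType

end Dyadic

section Hilbert

theorem sum_norm_sq_starProjection_orthonormalBasis {𝕜 ι E : Type*} [RCLike 𝕜] [Fintype ι]
    [NormedAddCommGroup E] [InnerProductSpace 𝕜 E] [FiniteDimensional 𝕜 E] (V : Submodule 𝕜 E)
    (b : OrthonormalBasis ι 𝕜 E) :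
    ∑ i, ‖V.starProjection (b i)‖ ^ 2 = Module.finrank 𝕜 V := by
  have hproj : LinearMap.IsProj V (V.starProjection : E →ₗ[𝕜] E) :=
    ⟨V.starProjection_apply_mem, fun _ => Submodule.starProjection_eq_self_iff.2⟩
  have htrace := LinearMap.trace_eq_sum_inner (V.starProjection : E →ₗ[𝕜] E) b
  rw [hproj.trace] at htrace
  have hnorm : ∀ v : E, ‖V.starProjection v‖ ^ 2 = RCLike.re (inner 𝕜 v (V.starProjection v)) :=
    fun v => by
      rw [← V.inner_starProjection_left_eq_right, V.re_inner_starProjection_eq_normSq]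
      rfl
  simp only [hnorm, ← map_sum]
  exact (congrArg RCLike.re htrace).symm.trans (RCLike.natCast_re _)

theorem sum_norm_sq_orthonormalBasis_le {𝕜 ι E Y : Type*} [RCLike 𝕜] [Fintype ι]
    [NormedAddCommGroup E] [InnerProductSpace 𝕜 E] [FiniteDimensional 𝕜 E]
    [SeminormedAddCommGroup Y] [NormedSpace 𝕜 Y] (S : E →L[𝕜] Y) (b : OrthonormalBasis ι 𝕜 E) :
    ∑ i, ‖S (b i)‖ ^ 2 ≤ ‖S‖ ^ 2 * Module.finrank 𝕜 (LinearMap.range (S : E →ₗ[𝕜] Y)) := by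
  let V := (LinearMap.ker (S : E →ₗ[𝕜] Y))ᗮ
  have hrank : Module.finrank 𝕜 V = Module.finrank 𝕜 (LinearMap.range (S : E →ₗ[𝕜] Y)) := by
    have hS := (S : E →ₗ[𝕜] Y).finrank_range_add_finrank_ker
    have hV : Module.finrank 𝕜 (LinearMap.ker (S : E →ₗ[𝕜] Y)) + Module.finrank 𝕜 V =
        Module.finrank 𝕜 E := Submodule.finrank_add_finrank_orthogonal _
    omega
  have hSV : ∀ v, S v = S (V.starProjection v) := fun v => by
    have hker := V.sub_starProjection_mem_orthogonal v
    rw [Submodule.orthogonal_orthogonal] at hker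
    exact sub_eq_zero.1 ((map_sub S _ _).symm.trans hker)
  calc ∑ i, ‖S (b i)‖ ^ 2 ≤ ∑ i, ‖S‖ ^ 2 * ‖V.starProjection (b i)‖ ^ 2 :=
        Finset.sum_le_sum fun i _ => by
          rw [hSV, ← mul_pow]
          exact pow_le_pow_left₀ (norm_nonneg _) (S.le_opNorm _) 2
    _ = ‖S‖ ^ 2 * Module.finrank 𝕜 (LinearMap.range (S : E →ₗ[𝕜] Y)) := by
        rw [← Finset.mul_sum, sum_norm_sq_starProjection_orthonormalBasis, hrank]

variable {ι Y : Type*} [Fintype ι] [DecidableEq ι] [SeminormedAddCommGroup Y] [NormedSpace ℝ Y]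
  {S : (ι → ℝ) →ₗ[ℝ] Y}

theorem sum_norm_single_le_of_sum_mul_sq_le_one {w : ι → ℝ} {K : ℝ} (hw : ∀ i, 0 < w i)
    (hw_sum : ∑ i, w i ≤ 1) (hK : 0 ≤ K) (hS : ∀ x, ∑ i, w i * x i ^ 2 ≤ 1 → ‖S x‖ ≤ K) :
    ∑ i, ‖S (Pi.single i 1)‖ ≤ K * √(Module.finrank ℝ (LinearMap.range S)) := by
  -- `h ↦ h / √w` is an isometry from `ℓ₂` onto `L_2(w)`.
  let D : EuclideanSpace ℝ ι →ₗ[ℝ] ι → ℝ :=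
    LinearMap.mulLeft ℝ (fun i => (√(w i))⁻¹) ∘ₗ (WithLp.linearEquiv 2 ℝ (ι → ℝ)).toLinearMap
  have hD : ∀ h i, D h i = (√(w i))⁻¹ * h i := fun _ _ => rfl
  let R : EuclideanSpace ℝ ι →L[ℝ] Y := (S ∘ₗ D).toContinuousLinearMap
  have hR : ∀ h, R h = S (D h) := fun _ => rfl
  have hD_isometry : ∀ h, ∑ i, w i * D h i ^ 2 = ‖h‖ ^ 2 := fun h => by
    rw [EuclideanSpace.norm_sq_eq]
    refine Finset.sum_congr rfl fun i _ => ?_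
    rw [hD, mul_pow, inv_pow, Real.sq_sqrt (hw i).le, mul_inv_cancel_left₀ (hw i).ne',
      Real.norm_eq_abs, sq_abs]
  have hR_norm : ‖R‖ ≤ K := ContinuousLinearMap.opNorm_le_of_unit_norm hK fun h hh =>
    hS (D h) (by rw [hD_isometry, hh, one_pow])
  have hR_rank : Module.finrank ℝ (LinearMap.range (R : EuclideanSpace ℝ ι →ₗ[ℝ] Y)) ≤
      Module.finrank ℝ (LinearMap.range S) :=
    Submodule.finrank_mono (LinearMap.range_comp_le_range D S)
  have hsingle : ∀ i, ‖S (Pi.single i 1)‖ = √(w i) * ‖R (EuclideanSpace.basisFun ι ℝ i)‖ := by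
    intro i
    have hD_single : √(w i) • D (EuclideanSpace.basisFun ι ℝ i) = Pi.single i 1 := by
      ext j
      rcases eq_or_ne j i with rfl | hj
      · simp [hD, (Real.sqrt_pos.2 (hw j)).ne']
      · simp [hD, hj]
    rw [← hD_single, map_smul, norm_smul, Real.norm_of_nonneg (Real.sqrt_nonneg _), hR]
  calc ∑ i, ‖S (Pi.single i 1)‖
      = ∑ i, √(w i) * ‖R (EuclideanSpace.basisFun ι ℝ i)‖ := by simp only [hsingle]
    _ ≤ √(∑ i, √(w i) ^ 2) * √(∑ i, ‖R (EuclideanSpace.basisFun ι ℝ i)‖ ^ 2) :=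
        Real.sum_mul_le_sqrt_mul_sqrt _ _ _
    _ ≤ √1 * √(K ^ 2 * Module.finrank ℝ (LinearMap.range S)) := by
        simp only [Real.sq_sqrt (hw _).le]
        gcongr
        exact (sum_norm_sq_orthonormalBasis_le R _).trans (by gcongr)
    _ = K * √(Module.finrank ℝ (LinearMap.range S)) := by
        rw [Real.sqrt_one, one_mul, Real.sqrt_mul (sq_nonneg K), Real.sqrt_sq hK]

theorem HasSummingBound.sum_norm_single_le {r A P : ℝ} (hr : 1 ≤ r) (hr' : r < 2)
    (hS : HasSummingBound S r A) (hP : 0 ≤ P) (hAP : A < P ^ r) :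
    ∑ i, ‖S (Pi.single i 1)‖ ≤
      6 * P * (1 / r - 1 / 2) ^ (-(1 / 2) : ℝ) * √(Module.finrank ℝ (LinearMap.range S)) := by
  have hr₀ : 0 < r := by linarith
  have hp : 1 / 2 < 1 / r := one_div_lt_one_div_of_lt hr₀ hr'
  have hp' : 1 / r ≤ 1 := (div_le_one hr₀).2 hr
  have hconst : (r * P ^ r) ^ (1 / r) ≤ 2 * P := by
    rw [Real.mul_rpow hr₀.le (by positivity), ← Real.rpow_mul hP, mul_one_div_cancel hr₀.ne',
      Real.rpow_one]
    gcongr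
    exact (Real.rpow_le_self_of_one_le hr hp').trans hr'.le
  obtain ⟨w, hw, hw_sum, hSw⟩ := hS.exists_hasRestrictedType hr hAP
  have hfactor : 0 ≤ (1 / r - 1 / 2) ^ (-(1 / 2) : ℝ) := Real.rpow_nonneg (by linarith) _
  refine sum_norm_single_le_of_sum_mul_sq_le_one hw hw_sum
    (mul_nonneg (by positivity) hfactor) fun x hx => ?_
  calc ‖S x‖ ≤ 3 * (r * P ^ r) ^ (1 / r) * (1 / r - 1 / 2) ^ (-(1 / 2) : ℝ) :=
        hSw.norm_le_of_sum_mul_sq_le_one (by positivity) (fun i => (hw i).le) hw_sum hp hp' hx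
    _ ≤ 3 * (2 * P) * (1 / r - 1 / 2) ^ (-(1 / 2) : ℝ) := by gcongr
    _ = 6 * P * (1 / r - 1 / 2) ^ (-(1 / 2) : ℝ) := by ring

end Hilbert

section SummingNorm

theorem eSum_ofReal {ι : Type*} [Fintype ι] {r : ℝ} (hr : 0 < r) {f : ι → ℝ} (hf : ∀ i, 0 ≤ f i) :
    eSum (ENNReal.ofReal r) (fun i => ENNReal.ofReal (f i)) =
      ENNReal.ofReal ((∑ i, f i ^ r) ^ (1 / r)) := by
  have hpow : ∀ i, 0 ≤ f i ^ r := fun i => Real.rpow_nonneg (hf i) r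
  rw [eSum, if_neg ENNReal.ofReal_ne_top, ENNReal.toReal_ofReal hr.le,
    ← ENNReal.ofReal_rpow_of_nonneg (Finset.sum_nonneg fun i _ => hpow i) (by positivity),
    ENNReal.ofReal_sum_of_nonneg fun i _ => hpow i]
  simp only [ENNReal.ofReal_rpow_of_nonneg (hf _) hr.le]

theorem eSum_one_ofReal {ι : Type*} [Fintype ι] {f : ι → ℝ} (hf : ∀ i, 0 ≤ f i) :
    eSum 1 (fun i => ENNReal.ofReal (f i)) = ENNReal.ofReal (∑ i, f i) := by
  simpa using eSum_ofReal one_pos hf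

variable {X Y : Type*} [NormedAddCommGroup X] [NormedSpace ℝ X] [NormedAddCommGroup Y]
  [NormedSpace ℝ Y] {T : X →L[ℝ] Y} {m : ℕ} {x : Fin m → X}

theorem weakLq_one_le_one_iff :
    weakLq 1 x ≤ 1 ↔ ∀ f : X →L[ℝ] ℝ, ‖f‖ ≤ 1 → ∑ k, |f (x k)| ≤ 1 := by
  simp only [weakLq, iSup_le_iff, Subtype.forall, eSum_one_ofReal fun _ => abs_nonneg _,
    ENNReal.ofReal_le_one]

theorem weakLq_one_sum_smul_le_one {N : ℕ} {a : Fin N → Fin m → ℝ} (hx : weakLq 1 x ≤ 1)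
    (ha : ∀ i, ∑ k, |a k i| ≤ 1) : weakLq 1 (fun k => ∑ i, a k i • x i) ≤ 1 := by
  rw [weakLq_one_le_one_iff] at hx ⊢
  intro f hf
  calc ∑ k, |f (∑ i, a k i • x i)| ≤ ∑ k, ∑ i, |a k i| * |f (x i)| :=
        Finset.sum_le_sum fun k _ => by
          simp only [map_sum, map_smul, smul_eq_mul, ← abs_mul]
          exact Finset.abs_sum_le_sum_abs _ _
    _ = ∑ i, (∑ k, |a k i|) * |f (x i)| := by
        rw [Finset.sum_comm]
        simp only [Finset.sum_mul]
    _ ≤ ∑ i, |f (x i)| := Finset.sum_le_sum fun i _ =>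
        mul_le_of_le_one_left (abs_nonneg _) (ha i)
    _ ≤ 1 := hx f hf

theorem eSum_norm_le_piPQ {p q : ℝ≥0∞} (hx : weakLq q x ≤ 1) :
    eSum p (fun k => ENNReal.ofReal ‖T (x k)‖) ≤ piPQ p q T :=
  (le_iSup (fun x : {x : Fin m → X // weakLq q x ≤ 1} =>
    eSum p fun k => ENNReal.ofReal ‖T (x.1 k)‖) ⟨x, hx⟩).trans (le_iSup (fun m => piN p q m T) m)

theorem hasSummingBound_comp_linearCombination {r A : ℝ} (hr : 0 < r) (hA : 0 ≤ A)
    (hT : piPQ (ENNReal.ofReal r) 1 T ≤ ENNReal.ofReal A) (hx : weakLq 1 x ≤ 1) :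
    HasSummingBound ((T : X →ₗ[ℝ] Y) ∘ₗ Fintype.linearCombination ℝ x) r (A ^ r) := by
  intro N a ha
  have hle := (eSum_norm_le_piPQ (weakLq_one_sum_smul_le_one hx ha)).trans hT
  rw [eSum_ofReal hr fun _ => norm_nonneg _, ENNReal.ofReal_le_ofReal_iff hA, one_div,
    Real.rpow_inv_le_iff_of_pos (by positivity) hA hr] at hle
  exact hle

theorem piPQ_one_one_le {r A P : ℝ} {n : ℕ} (hr : 1 ≤ r) (hr' : r < 2) (hT : RankLE T n)
    (hA : 0 ≤ A) (hAP : A < P) (hTA : piPQ (ENNReal.ofReal r) 1 T ≤ ENNReal.ofReal A) :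
    piPQ 1 1 T ≤
      ENNReal.ofReal (6 * (1 / r - 1 / 2) ^ (-(1 / 2) : ℝ) * (n : ℝ) ^ ((1 : ℝ) / 2) * P) := by
  refine iSup_le fun m => iSup_le fun ⟨x, hx⟩ => ?_
  rw [eSum_one_ofReal fun _ => norm_nonneg _]
  have hr₀ : 0 < r := by linarith
  have hP : 0 ≤ P := by linarith
  have hsub : 0 ≤ 1 / r - 1 / 2 := sub_nonneg.2 (one_div_le_one_div_of_le hr₀ hr'.le)
  let S : (Fin m → ℝ) →ₗ[ℝ] Y := (T : X →ₗ[ℝ] Y) ∘ₗ Fintype.linearCombination ℝ x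
  have hS_single : ∀ i, S (Pi.single i 1) = T (x i) := fun i => by simp [S]
  have hS_rank : Module.finrank ℝ (LinearMap.range S) ≤ n :=
    have := hT.1
    (Submodule.finrank_mono (LinearMap.range_comp_le_range _ _)).trans hT.2
  have hS : HasSummingBound S r (A ^ r) := hasSummingBound_comp_linearCombination hr₀ hA hTA hx
  refine ENNReal.ofReal_le_ofReal ?_
  calc ∑ k, ‖T (x k)‖ = ∑ k, ‖S (Pi.single k 1)‖ := by simp only [hS_single]
    _ ≤ 6 * P * (1 / r - 1 / 2) ^ (-(1 / 2) : ℝ) * √(Module.finrank ℝ (LinearMap.range S)) :=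
        hS.sum_norm_single_le hr hr' hP (Real.rpow_lt_rpow hA hAP hr₀)
    _ ≤ 6 * P * (1 / r - 1 / 2) ^ (-(1 / 2) : ℝ) * √n := by gcongr
    _ = _ := by rw [Real.sqrt_eq_rpow]; ring

theorem piPQ_zero {p : ℝ≥0∞} (hp : p ≠ 0) (q : ℝ≥0∞) : piPQ p q (0 : X →L[ℝ] Y) = 0 := by
  have heSum : ∀ k, eSum p (fun _ : Fin k => (0 : ℝ≥0∞)) = 0 := fun k => by
    rcases eq_or_ne p ∞ with rfl | hp_top
    · simp [eSum]
    · simp [eSum, hp_top, ENNReal.toReal_pos hp hp_top]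
  simp [piPQ, piN, heSum]

theorem RankLE.eq_zero (hT : RankLE T 0) : T = 0 := by
  have := hT.1
  have hrange := Submodule.finrank_eq_zero.1 (Nat.le_zero.1 hT.2)
  exact ContinuousLinearMap.coe_injective (LinearMap.range_eq_bot.1 hrange)

end SummingNorm

theorem statement8_general {r : ℝ} (hr : 1 ≤ r) (hr' : r < 2) {n : ℕ} {X Y : Type*}
    [NormedAddCommGroup X] [NormedSpace ℝ X] [NormedAddCommGroup Y] [NormedSpace ℝ Y]
    {T : X →L[ℝ] Y} (hT : RankLE T n) :
    piPQ 1 1 T ≤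
      ENNReal.ofReal (6 * (1 / r - 1 / 2) ^ (-(1 / 2) : ℝ) * (n : ℝ) ^ ((1 : ℝ) / 2)) *
        piPQ (ENNReal.ofReal r) 1 T := by
  rcases n.eq_zero_or_pos with rfl | hn
  · rw [hT.eq_zero, piPQ_zero one_ne_zero]
    exact zero_le
  have hsub : 0 < 1 / r - 1 / 2 := sub_pos.2 (one_div_lt_one_div_of_lt (by linarith) hr')
  refine ENNReal.le_mul_of_forall_lt (Or.inl (ENNReal.ofReal_pos.2 (by positivity)).ne')
    (Or.inl ENNReal.ofReal_ne_top) fun c hc b hb => ?_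
  rcases eq_or_ne b ⊤ with rfl | hb_top
  · rw [ENNReal.mul_top (pos_of_gt hc).ne']
    exact le_top
  have hT_top := (hb.trans_le le_top).ne
  refine (piPQ_one_one_le hr hr' hT ENNReal.toReal_nonneg
    ((ENNReal.toReal_lt_toReal hT_top hb_top).2 hb) (ENNReal.ofReal_toReal hT_top).ge).trans ?_
  rw [ENNReal.ofReal_mul' ENNReal.toReal_nonneg, ENNReal.ofReal_toReal hb_top]
  gcongr

/-- there is an absolute constant `c₀` such that for `1 ≤ r < 2`
and any absolutely `(r,1)`-summing operator `T` of rank at most `n`,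
`π_1(T) ≤ c₀ (1/r - 1/2)^{-1/2} n^{1/2} π_{r,1}(T)`. -/
theorem statement8 :
    ∃ c₀ : ℝ, 0 < c₀ ∧
      ∀ (r : ℝ), 1 ≤ r → r < 2 →
        ∀ (n : ℕ) (X Y : Type*) [NormedAddCommGroup X] [NormedSpace ℝ X] [CompleteSpace X]
          [NormedAddCommGroup Y] [NormedSpace ℝ Y] [CompleteSpace Y]
          (T : X →L[ℝ] Y), RankLE T n → piPQ (ENNReal.ofReal r) 1 T < ∞ →
          piPQ 1 1 T ≤
            ENNReal.ofReal (c₀ * (1 / r - 1 / 2) ^ (-(1 / 2) : ℝ) * (n : ℝ) ^ ((1 : ℝ) / 2)) *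
              piPQ (ENNReal.ofReal r) 1 T :=
  ⟨6, by norm_num, fun _ hr hr' _ _ _ _ _ _ _ _ _ _ hT _ => statement8_general hr hr' hT⟩

end
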